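/- arXiv:1712.01366 — 2 statements merged into one kernel-verified Lean document; each statement's English description precedes it below -/
import Mathlib

section
/- The constant 1/4 in the 3-dimensional Hardy inequality is sharp: for every a > 1/4 there exists a compactly supported smooth function u : ℝ³ → ℂ with a·∫ |u(x)|²/|x|² dx > ∫ |∇u(x)|² dx. -/
open MeasureTheory

/-!
In the logarithmic radial variable `t = log ‖x‖` on an `n`-dimensional space, write a radial
function as `u x = exp (-s * t) * f t` with `s = (n - 2) / 2`. Up to the same constant factor,
`∫ ‖u‖² / ‖x‖²` becomes `∫ f²` and `∫ ‖∇u‖²` becomes `∫ (f' - s f)² = ∫ f'² + s² ∫ f²`, the cross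
term being the integral of a derivative. Stretching a fixed bump function makes `∫ f'²`
arbitrarily small compared with `∫ f²`, so no constant larger than `s²` is admissible.
-/

open Module Set
open scoped ContDiff Topology

section RealLine

variable {f : ℝ → ℝ}

lemma hasCompactSupport_sq (hfc : HasCompactSupport f) : HasCompactSupport fun t ↦ f t ^ 2 := by
  simpa only [sq, Pi.mul_def] using hfc.mul_right (f' := f)

lemma integrable_sq_of_hasCompactSupport (hf : Continuous f) (hfc : HasCompactSupport f) :
    Integrable fun t ↦ f t ^ 2 :=
  (hf.pow 2).integrable_of_hasCompactSupport (hasCompactSupport_sq hfc)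

lemma integrable_mul_deriv_of_hasCompactSupport (hf : ContDiff ℝ 1 f)
    (hfc : HasCompactSupport f) : Integrable fun t ↦ f t * deriv f t :=
  (hf.continuous.mul hf.continuous_deriv_one).integrable_of_hasCompactSupport hfc.mul_right

lemma integral_mul_deriv_eq_zero_of_hasCompactSupport (hf : ContDiff ℝ 1 f)
    (hfc : HasCompactSupport f) : ∫ t, f t * deriv f t = 0 := by
  have hderiv (t : ℝ) : HasDerivAt (fun t ↦ f t ^ 2 / 2) (f t * deriv f t) t :=
    (((hf.differentiable one_ne_zero t).hasDerivAt.pow 2).div_const 2).congr_deriv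
      (by push_cast; ring)
  exact integral_eq_zero_of_hasDerivAt_of_integrable hderiv
    (integrable_mul_deriv_of_hasCompactSupport hf hfc)
    ((integrable_sq_of_hasCompactSupport hf.continuous hfc).div_const 2)

lemma integral_deriv_sub_const_mul_sq (hf : ContDiff ℝ 1 f) (hfc : HasCompactSupport f) (s : ℝ) :
    ∫ t, (deriv f t - s * f t) ^ 2 = (∫ t, deriv f t ^ 2) + s ^ 2 * ∫ t, f t ^ 2 := by
  have hf_sq := (integrable_sq_of_hasCompactSupport hf.continuous hfc).const_mul (s ^ 2)
  have hderiv_sq := integrable_sq_of_hasCompactSupport hf.continuous_deriv_one hfc.deriv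
  have hsum : Integrable fun t ↦ deriv f t ^ 2 + s ^ 2 * f t ^ 2 := hderiv_sq.add hf_sq
  have hcross := (integrable_mul_deriv_of_hasCompactSupport hf hfc).const_mul (2 * s)
  calc ∫ t, (deriv f t - s * f t) ^ 2
      = ∫ t, (deriv f t ^ 2 + s ^ 2 * f t ^ 2 - 2 * s * (f t * deriv f t)) := by
        congr with t; ring
    _ = (∫ t, deriv f t ^ 2) + s ^ 2 * ∫ t, f t ^ 2 := by
        rw [integral_sub hsum hcross, integral_add hderiv_sq hf_sq,
          integral_const_mul, integral_const_mul,
          integral_mul_deriv_eq_zero_of_hasCompactSupport hf hfc, mul_zero, sub_zero]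

lemma integral_deriv_comp_mul_left_sq (f : ℝ → ℝ) (c : ℝ) :
    ∫ t, deriv (fun t ↦ f (c * t)) t ^ 2 = c ^ 2 * (|c⁻¹| * ∫ t, deriv f t ^ 2) := by
  simp_rw [deriv_comp_mul_left, smul_eq_mul, mul_pow, integral_const_mul]
  rw [Measure.integral_comp_mul_left (fun t ↦ deriv f t ^ 2), smul_eq_mul]

lemma exists_integral_deriv_sq_lt {ε : ℝ} (hε : 0 < ε) :
    ∃ f : ℝ → ℝ, ContDiff ℝ ∞ f ∧ HasCompactSupport f ∧
      ∫ t, deriv f t ^ 2 < ε * ∫ t, f t ^ 2 := by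
  obtain ⟨φ⟩ : Nonempty (ContDiffBump (0 : ℝ)) := inferInstance
  have hφ_pos : 0 < ∫ t, φ t ^ 2 :=
    (φ.continuous.pow 2).integral_pos_of_hasCompactSupport_nonneg_nonzero (x := 0)
      (hasCompactSupport_sq φ.hasCompactSupport) (fun t ↦ sq_nonneg (φ t))
      (pow_ne_zero 2 (φ.pos_of_mem_ball (Metric.mem_ball_self φ.rOut_pos)).ne')
  obtain ⟨c, hc, hc_lt⟩ : ∃ c > 0, c ^ 2 * ∫ t, deriv φ t ^ 2 < ε * ∫ t, φ t ^ 2 := by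
    have hlim : Filter.Tendsto (fun c : ℝ ↦ c ^ 2 * ∫ t, deriv φ t ^ 2) (𝓝[>] 0) (𝓝 0) :=
      ((by fun_prop : Continuous fun c : ℝ ↦ c ^ 2 * ∫ t, deriv φ t ^ 2).tendsto' 0 0
        (by simp)).mono_left nhdsWithin_le_nhds
    exact (eventually_mem_nhdsWithin.and
      (hlim.eventually_lt_const (mul_pos hε hφ_pos))).exists
  refine ⟨fun t ↦ φ (c * t), φ.contDiff.comp (contDiff_const.mul contDiff_id),
    by simpa only [smul_eq_mul] using φ.hasCompactSupport.comp_smul hc.ne', ?_⟩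
  rw [integral_deriv_comp_mul_left_sq, Measure.integral_comp_mul_left (fun t ↦ φ t ^ 2),
    smul_eq_mul, mul_left_comm, mul_left_comm ε]
  gcongr

variable {F : Type*} [NormedAddCommGroup F] [NormedSpace ℝ F]

lemma deriv_exp_mul_smul_const (hf : Differentiable ℝ f) (s : ℝ) (w : F) (t : ℝ) :
    deriv (fun t ↦ (Real.exp (-s * t) * f t) • w) t =
      (Real.exp (-s * t) * (deriv f t - s * f t)) • w := by
  have hexp : HasDerivAt (fun t ↦ Real.exp (-s * t)) (Real.exp (-s * t) * -s) t := by
    simpa using ((hasDerivAt_id t).const_mul (-s)).exp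
  refine ((hexp.fun_mul (hf t).hasDerivAt).smul_const w).deriv.trans ?_
  ring_nf

lemma exp_two_mul_mul_norm_exp_neg_mul_smul_sq {w : F} (hw : ‖w‖ = 1) (s t y : ℝ) :
    Real.exp (2 * s * t) * ‖(Real.exp (-s * t) * y) • w‖ ^ 2 = y ^ 2 := by
  have hcancel : 2 * s * t + (2 : ℕ) * (-s * t) = 0 := by push_cast; ring
  rw [norm_smul, hw, mul_one, Real.norm_eq_abs, sq_abs, mul_pow, ← Real.exp_nat_mul, ← mul_assoc,
    ← Real.exp_add, hcancel, Real.exp_zero, one_mul]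

variable (F) in
lemma exists_integral_exp_mul_norm_deriv_sq_lt [Nontrivial F] {s a : ℝ} (ha : s ^ 2 < a) :
    ∃ ψ : ℝ → F, ContDiff ℝ ∞ ψ ∧ HasCompactSupport ψ ∧
      ∫ t, Real.exp (2 * s * t) * ‖deriv ψ t‖ ^ 2 <
        a * ∫ t, Real.exp (2 * s * t) * ‖ψ t‖ ^ 2 := by
  obtain ⟨f, hf, hfc, hlt⟩ := exists_integral_deriv_sq_lt (sub_pos.2 ha)
  obtain ⟨w, hw⟩ := exists_norm_eq F zero_le_one
  refine ⟨fun t ↦ (Real.exp (-s * t) * f t) • w, by fun_prop,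
    HasCompactSupport.smul_right (f := fun t ↦ Real.exp (-s * t) * f t) hfc.mul_left, ?_⟩
  simp_rw [deriv_exp_mul_smul_const (hf.differentiable (by simp)),
    exp_two_mul_mul_norm_exp_neg_mul_smul_sq hw,
    integral_deriv_sub_const_mul_sq (hf.of_le (by simp)) hfc]
  linarith

end RealLine

lemma integral_Ioi_zero_eq_integral_exp_smul {G : Type*} [NormedAddCommGroup G] [NormedSpace ℝ G]
    (g : ℝ → G) : ∫ r in Ioi (0 : ℝ), g r = ∫ t, Real.exp t • g (Real.exp t) := by
  simpa [abs_of_pos (Real.exp_pos _)] using integral_image_eq_integral_abs_deriv_smul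
    MeasurableSet.univ (fun t _ ↦ (Real.hasDerivAt_exp t).hasDerivWithinAt)
    Real.exp_injective.injOn g

lemma integral_comp_log_norm_div_norm_sq {E : Type*} [NormedAddCommGroup E] [NormedSpace ℝ E]
    [FiniteDimensional ℝ E] [Nontrivial E] [MeasurableSpace E] [BorelSpace E]
    (μ : Measure E) [μ.IsAddHaarMeasure] (g : ℝ → ℝ) :
    ∫ x : E, g (Real.log ‖x‖) / ‖x‖ ^ 2 ∂μ =
      finrank ℝ E * μ.real (Metric.ball 0 1) * ∫ t, Real.exp ((finrank ℝ E - 2) * t) * g t := by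
  rw [integral_fun_norm_addHaar μ fun r ↦ g (Real.log r) / r ^ 2,
    integral_Ioi_zero_eq_integral_exp_smul, nsmul_eq_mul, smul_eq_mul, mul_assoc]
  congr with t
  have hexp : Real.exp ((finrank ℝ E - 2) * t) =
      Real.exp t * Real.exp t ^ (finrank ℝ E - 1) / Real.exp t ^ 2 := by
    rw [mul_pow_sub_one finrank_pos.ne', ← Real.exp_nat_mul, ← Real.exp_nat_mul, ← Real.exp_sub]
    push_cast
    ring_nf
  rw [hexp, Real.log_exp, smul_eq_mul, smul_eq_mul]
  ring

section LogRadial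

variable {E F : Type*} [NormedAddCommGroup E] [NormedAddCommGroup F]

open Classical in
/-- The radial function on `E` with profile `ψ` in the logarithmic variable `log ‖x‖`. It is set
to `0` at the origin, where the junk value `Real.log 0 = 0` would produce `ψ 0`. -/
noncomputable def logRadial (ψ : ℝ → F) (x : E) : F :=
  if x = 0 then 0 else ψ (Real.log ‖x‖)

namespace logRadial

variable {ψ : ℝ → F}

lemma apply_of_ne_zero (ψ : ℝ → F) {x : E} (hx : x ≠ 0) :
    logRadial ψ x = ψ (Real.log ‖x‖) :=
  if_neg hx

lemma eventuallyEq_of_ne_zero (ψ : ℝ → F) {x : E} (hx : x ≠ 0) :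
    logRadial ψ =ᶠ[𝓝 x] fun y ↦ ψ (Real.log ‖y‖) :=
  (eventually_ne_nhds hx).mono fun _ ↦ apply_of_ne_zero ψ

lemma tsupport_subset (hψc : HasCompactSupport ψ) :
    tsupport (logRadial ψ : E → F) ⊆ norm ⁻¹' (Real.exp '' tsupport ψ) := by
  refine closure_minimal (fun x hx ↦ ?_)
    ((hψc.isCompact.image Real.continuous_exp).isClosed.preimage continuous_norm)
  have hx0 : x ≠ 0 := by
    rintro rfl
    simp [logRadial] at hx
  rw [Function.mem_support, apply_of_ne_zero ψ hx0] at hx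
  exact ⟨Real.log ‖x‖, subset_tsupport ψ hx, Real.exp_log (norm_pos_iff.2 hx0)⟩

lemma zero_notMem_tsupport (hψc : HasCompactSupport ψ) :
    (0 : E) ∉ tsupport (logRadial ψ : E → F) := fun h ↦ by
  obtain ⟨t, -, ht⟩ := tsupport_subset hψc h
  exact (Real.exp_pos t).ne' (ht.trans norm_zero)

lemma hasCompactSupport [ProperSpace E] (hψc : HasCompactSupport ψ) :
    HasCompactSupport (logRadial ψ : E → F) := by
  have hproper : IsProperMap (norm : E → ℝ) := by
    simpa only [funext dist_zero_left] using isProperMap_dist (0 : E)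
  exact (hproper.isCompact_preimage (hψc.isCompact.image Real.continuous_exp)).of_isClosed_subset
    (isClosed_tsupport _) (tsupport_subset hψc)

lemma integral_norm_sq_div_norm_sq [NormedSpace ℝ E] [FiniteDimensional ℝ E] [Nontrivial E]
    [MeasurableSpace E] [BorelSpace E] (μ : Measure E) [μ.IsAddHaarMeasure] (ψ : ℝ → F) :
    ∫ x : E, ‖logRadial ψ x‖ ^ 2 / ‖x‖ ^ 2 ∂μ = finrank ℝ E * μ.real (Metric.ball 0 1) *
      ∫ t, Real.exp ((finrank ℝ E - 2) * t) * ‖ψ t‖ ^ 2 := by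
  rw [← integral_comp_log_norm_div_norm_sq μ fun t ↦ ‖ψ t‖ ^ 2]
  refine integral_congr_ae ((Measure.ae_ne μ 0).mono fun x hx ↦ ?_)
  simp only [apply_of_ne_zero ψ hx]

variable [InnerProductSpace ℝ E] [NormedSpace ℝ F]

lemma contDiff {n : ℕ∞ω} (hψ : ContDiff ℝ n ψ)
    (hψc : HasCompactSupport ψ) : ContDiff ℝ n (logRadial ψ : E → F) := by
  refine contDiff_iff_contDiffAt.2 fun x ↦ ?_
  rcases eq_or_ne x 0 with rfl | hx
  · exact contDiffAt_const.congr_of_eventuallyEq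
      (notMem_tsupport_iff_eventuallyEq.1 (zero_notMem_tsupport hψc))
  · exact (hψ.contDiffAt.comp x
      ((contDiffAt_norm ℝ hx).log (norm_ne_zero_iff.2 hx))).congr_of_eventuallyEq
      (eventuallyEq_of_ne_zero ψ hx)

lemma norm_fderiv {x : E} (hx : x ≠ 0)
    (hψ : DifferentiableAt ℝ ψ (Real.log ‖x‖)) :
    ‖fderiv ℝ (logRadial ψ) x‖ = ‖deriv ψ (Real.log ‖x‖)‖ / ‖x‖ := by
  have : Nontrivial E := ⟨x, 0, hx⟩
  have hnorm : DifferentiableAt ℝ (‖·‖) x :=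
    (contDiffAt_norm ℝ (n := 1) hx).differentiableAt one_ne_zero
  have hfderiv : fderiv ℝ (logRadial ψ) x =
      (fderiv ℝ (‖·‖) x).smulRight (‖x‖⁻¹ • deriv ψ (Real.log ‖x‖)) := by
    rw [(eventuallyEq_of_ne_zero ψ hx).fderiv_eq]
    refine HasFDerivAt.fderiv ?_
    refine ((hψ.hasDerivAt.scomp ‖x‖ (Real.hasDerivAt_log
      (norm_ne_zero_iff.2 hx))).hasFDerivAt.comp x hnorm.hasFDerivAt).congr_fderiv ?_
    ext v
    simp
  rw [hfderiv, ContinuousLinearMap.norm_smulRight_apply, norm_fderiv_norm hnorm, norm_smul,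
    norm_inv, norm_norm, one_mul, div_eq_inv_mul]

lemma integral_norm_fderiv_sq [FiniteDimensional ℝ E] [Nontrivial E] [MeasurableSpace E]
    [BorelSpace E] (μ : Measure E) [μ.IsAddHaarMeasure] (hψ : Differentiable ℝ ψ) :
    ∫ x : E, ‖fderiv ℝ (logRadial ψ) x‖ ^ 2 ∂μ = finrank ℝ E * μ.real (Metric.ball 0 1) *
      ∫ t, Real.exp ((finrank ℝ E - 2) * t) * ‖deriv ψ t‖ ^ 2 := by
  rw [← integral_comp_log_norm_div_norm_sq μ fun t ↦ ‖deriv ψ t‖ ^ 2]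
  refine integral_congr_ae ((Measure.ae_ne μ 0).mono fun x hx ↦ ?_)
  simp only [norm_fderiv hx (hψ _), div_pow]

end logRadial

end LogRadial

theorem hardy_inequality_dim3_sharp_general {E F : Type*} [NormedAddCommGroup E]
    [InnerProductSpace ℝ E] [FiniteDimensional ℝ E] [Nontrivial E] [MeasurableSpace E]
    [BorelSpace E] (μ : Measure E) [μ.IsAddHaarMeasure] [NormedAddCommGroup F] [NormedSpace ℝ F]
    [Nontrivial F] {a : ℝ} (ha : ((finrank ℝ E - 2) / 2 : ℝ) ^ 2 < a) :
    ∃ u : E → F, ContDiff ℝ ∞ u ∧ HasCompactSupport u ∧ 0 ∉ tsupport u ∧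
      ∫ x, ‖fderiv ℝ u x‖ ^ 2 ∂μ < a * ∫ x, ‖u x‖ ^ 2 / ‖x‖ ^ 2 ∂μ := by
  obtain ⟨ψ, hψ, hψc, hlt⟩ := exists_integral_exp_mul_norm_deriv_sq_lt F ha
  have hball : 0 < μ.real (Metric.ball (0 : E) 1) :=
    ENNReal.toReal_pos (Metric.measure_ball_pos μ 0 one_pos).ne' measure_ball_lt_top.ne
  have hdim : (0 : ℝ) < finrank ℝ E := Nat.cast_pos.2 finrank_pos
  refine ⟨logRadial ψ, logRadial.contDiff hψ hψc, logRadial.hasCompactSupport hψc,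
    logRadial.zero_notMem_tsupport hψc, ?_⟩
  rw [logRadial.integral_norm_fderiv_sq μ (hψ.differentiable (by simp)),
    logRadial.integral_norm_sq_div_norm_sq, mul_left_comm]
  rw [mul_div_cancel₀ _ two_ne_zero] at hlt
  gcongr

/-- Sharpness of the constant `1/4` in the 3-dimensional Hardy inequality: for every
`a > 1/4` there is a compactly supported smooth `u : ℝ³ → ℂ` with
`a ∫ |u|²/|x|² > ∫ |∇u|²`. -/
theorem hardy_inequality_dim3_sharp (a : ℝ) (ha : 1 / 4 < a) :
    ∃ u : EuclideanSpace ℝ (Fin 3) → ℂ, ContDiff ℝ (⊤ : ℕ∞) u ∧ HasCompactSupport u ∧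
      a * ∫ x : EuclideanSpace ℝ (Fin 3), ‖u x‖ ^ 2 / ‖x‖ ^ 2 >
        ∫ x : EuclideanSpace ℝ (Fin 3), ‖fderiv ℝ u x‖ ^ 2 := by
  have hconst : ((finrank ℝ (EuclideanSpace ℝ (Fin 3)) - 2) / 2 : ℝ) ^ 2 = 1 / 4 := by norm_num
  obtain ⟨u, hu, huc, -, hlt⟩ := hardy_inequality_dim3_sharp_general (F := ℂ)
    (volume : Measure (EuclideanSpace ℝ (Fin 3))) (hconst.trans_lt ha)
  exact ⟨u, hu, huc, hlt⟩
end

section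
/- Define K(x,y) = e^{-|x-y|}/|x-y| - ∫_{S²} e^{-||x|ω - y|}/||x|ω - y| dσ(ω), where σ is the uniform probability measure on S². Then for x, y ∈ ℝ³ with 2|y| < |x|, |K(x,y)| ≤ C·|y|·|x|^{-2}·e^{-|x|/4} for some absolute constant C. -/
open MeasureTheory

/-- The uniform probability measure on the unit sphere `S² ⊂ ℝ³`. -/
noncomputable def sphereProb :
    Measure (Metric.sphere (0 : EuclideanSpace ℝ (Fin 3)) 1) :=
  (((volume : Measure (EuclideanSpace ℝ (Fin 3))).toSphere Set.univ)⁻¹) •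
    (volume : Measure (EuclideanSpace ℝ (Fin 3))).toSphere

/-- The angular part of the Yukawa kernel. -/
noncomputable def angularYukawa (x y : EuclideanSpace ℝ (Fin 3)) : ℝ :=
  Real.exp (-‖x - y‖) / ‖x - y‖ -
    ∫ ω, Real.exp (-‖‖x‖ • (ω : EuclideanSpace ℝ (Fin 3)) - y‖) /
      ‖‖x‖ • (ω : EuclideanSpace ℝ (Fin 3)) - y‖ ∂sphereProb

/-! Both radii at which the Yukawa profile `e⁻ʳ / r` is compared, `‖x - y‖` and `‖‖x‖ω - y‖`, lie
in `[‖x‖ - ‖y‖, ‖x‖ + ‖y‖]`, an interval of length `2‖y‖` contained in `[‖x‖ / 2, ∞)`. On `[a, ∞)`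
the derivative of the profile is at most `2 a⁻² e^{-a/2}` in absolute value, so the mean value
theorem bounds the difference for every `ω`, and averaging over `ω` preserves the bound. -/

/-- The radial profile `r ↦ e⁻ʳ / r` of the Yukawa kernel, with the junk value `0` at `r = 0`. -/
noncomputable def yukawa (r : ℝ) : ℝ :=
  Real.exp (-r) / r

lemma yukawa_nonneg {r : ℝ} (hr : 0 ≤ r) : 0 ≤ yukawa r :=
  div_nonneg (Real.exp_pos _).le hr

lemma antitoneOn_yukawa : AntitoneOn yukawa (Set.Ioi 0) := by
  intro r (hr : 0 < r) s _ hrs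
  unfold yukawa
  gcongr

lemma measurable_yukawa : Measurable yukawa := by
  unfold yukawa
  fun_prop

lemma hasDerivAt_yukawa {r : ℝ} (hr : r ≠ 0) :
    HasDerivAt yukawa (-(Real.exp (-r) * (r + 1) / r ^ 2)) r := by
  refine ((hasDerivAt_neg r).exp.div (hasDerivAt_id r) hr).congr_deriv ?_
  simp only [id_eq]
  ring

lemma exp_neg_mul_add_one_le (r : ℝ) : Real.exp (-r) * (r + 1) ≤ 2 * Real.exp (-r / 2) := by
  have linear_le_exp : r + 1 ≤ 2 * Real.exp (r / 2) := by
    linarith [Real.add_one_le_exp (r / 2)]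
  calc Real.exp (-r) * (r + 1)
      ≤ Real.exp (-r) * (2 * Real.exp (r / 2)) := by gcongr
    _ = 2 * Real.exp (-r + r / 2) := by rw [Real.exp_add]; ring
    _ = 2 * Real.exp (-r / 2) := by ring_nf

lemma abs_deriv_yukawa_le {a r : ℝ} (ha : 0 < a) (har : a ≤ r) :
    |deriv yukawa r| ≤ 2 * a⁻¹ ^ 2 * Real.exp (-a / 2) := by
  have hr : 0 < r := ha.trans_le har
  calc |deriv yukawa r|
      = Real.exp (-r) * (r + 1) * r⁻¹ ^ 2 := by
        rw [(hasDerivAt_yukawa hr.ne').deriv, abs_neg, abs_of_nonneg (by positivity), inv_pow,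
          div_eq_mul_inv]
    _ ≤ 2 * Real.exp (-r / 2) * r⁻¹ ^ 2 := by gcongr ?_ * _; exact exp_neg_mul_add_one_le r
    _ ≤ 2 * Real.exp (-a / 2) * a⁻¹ ^ 2 := by gcongr
    _ = 2 * a⁻¹ ^ 2 * Real.exp (-a / 2) := by ring

lemma abs_yukawa_sub_yukawa_le {a r s : ℝ} (ha : 0 < a) (hr : a ≤ r) (hs : a ≤ s) :
    |yukawa r - yukawa s| ≤ 2 * a⁻¹ ^ 2 * Real.exp (-a / 2) * |r - s| :=
  (convex_Ici a).norm_image_sub_le_of_norm_deriv_le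
    (fun _ ht => (hasDerivAt_yukawa (ha.trans_le ht).ne').differentiableAt)
    (fun _ ht => abs_deriv_yukawa_le ha ht) hs hr

section Sphere

variable {E : Type*} [SeminormedAddCommGroup E]

lemma abs_norm_sub_sub_norm_sub_le_of_norm_eq {x z : E} (hz : ‖z‖ = ‖x‖) (y : E) :
    |‖x - y‖ - ‖z - y‖| ≤ 2 * ‖y‖ := by
  rw [abs_le]
  constructor <;>
    linarith [norm_sub_le x y, norm_sub_le z y, norm_sub_norm_le x y, norm_sub_norm_le z y]

variable [NormedSpace ℝ E]

lemma norm_norm_smul_sphere (x : E) (ω : Metric.sphere (0 : E) 1) : ‖‖x‖ • (ω : E)‖ = ‖x‖ := by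
  rw [norm_smul, norm_norm, norm_eq_of_mem_sphere, mul_one]

lemma abs_norm_sub_norm_le_norm_smul_sphere_sub (x y : E) (ω : Metric.sphere (0 : E) 1) :
    |‖x‖ - ‖y‖| ≤ ‖‖x‖ • (ω : E) - y‖ := by
  simpa only [norm_norm_smul_sphere] using abs_norm_sub_norm_le (‖x‖ • (ω : E)) y

variable [MeasurableSpace E] [OpensMeasurableSpace E] (μ : Measure (Metric.sphere (0 : E) 1))

lemma integrable_yukawa_norm_smul_sphere_sub [IsFiniteMeasure μ] {x y : E} (hxy : ‖x‖ ≠ ‖y‖) :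
    Integrable (fun ω : Metric.sphere (0 : E) 1 => yukawa ‖‖x‖ • (ω : E) - y‖) μ := by
  have hdist : Measurable fun ω : Metric.sphere (0 : E) 1 => ‖‖x‖ • (ω : E) - y‖ :=
    Continuous.measurable (by fun_prop)
  refine .of_bound (measurable_yukawa.comp hdist).aestronglyMeasurable (yukawa |‖x‖ - ‖y‖|)
    (.of_forall fun ω => ?_)
  have hgap : 0 < |‖x‖ - ‖y‖| := abs_pos.2 (sub_ne_zero.2 hxy)
  have hle := abs_norm_sub_norm_le_norm_smul_sphere_sub x y ω
  rw [Real.norm_of_nonneg (yukawa_nonneg (norm_nonneg _))]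
  exact antitoneOn_yukawa hgap (hgap.trans_le hle) hle

lemma abs_yukawa_sub_integral_sphere_le [IsProbabilityMeasure μ] {a : ℝ} {x y : E} (ha : 0 < a)
    (haxy : a ≤ |‖x‖ - ‖y‖|) :
    |yukawa ‖x - y‖ - ∫ ω, yukawa ‖‖x‖ • (ω : E) - y‖ ∂μ| ≤
      2 * a⁻¹ ^ 2 * Real.exp (-a / 2) * (2 * ‖y‖) := by
  have pointwise (ω : Metric.sphere (0 : E) 1) :
      |yukawa ‖x - y‖ - yukawa ‖‖x‖ • (ω : E) - y‖| ≤
        2 * a⁻¹ ^ 2 * Real.exp (-a / 2) * (2 * ‖y‖) := by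
    refine (abs_yukawa_sub_yukawa_le ha (haxy.trans (abs_norm_sub_norm_le x y))
      (haxy.trans (abs_norm_sub_norm_le_norm_smul_sphere_sub x y ω))).trans ?_
    gcongr
    exact abs_norm_sub_sub_norm_sub_le_of_norm_eq (norm_norm_smul_sphere x ω) y
  have hxy : ‖x‖ ≠ ‖y‖ := sub_ne_zero.1 (abs_pos.1 (ha.trans_le haxy))
  -- A closed ball is closed and convex, so it contains the mean of any function valued in it.
  exact mem_closedBall_iff_norm'.1 <| (convex_closedBall (yukawa ‖x - y‖) _).integral_mem
    Metric.isClosed_closedBall (.of_forall fun ω => mem_closedBall_iff_norm'.2 (pointwise ω))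
    (integrable_yukawa_norm_smul_sphere_sub μ hxy)

theorem angularYukawa_bound_far_general [IsProbabilityMeasure μ] {x y : E} (hx : 0 < ‖x‖)
    (hxy : 2 * ‖y‖ ≤ ‖x‖) :
    |yukawa ‖x - y‖ - ∫ ω, yukawa ‖‖x‖ • (ω : E) - y‖ ∂μ| ≤
      16 * ‖y‖ * ‖x‖⁻¹ ^ 2 * Real.exp (-‖x‖ / 4) := by
  have half_le : ‖x‖ / 2 ≤ |‖x‖ - ‖y‖| := by linarith [le_abs_self (‖x‖ - ‖y‖)]
  convert abs_yukawa_sub_integral_sphere_le μ (half_pos hx) half_le using 1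
  ring_nf

end Sphere

instance isProbabilityMeasure_sphereProb : IsProbabilityMeasure sphereProb := by
  have : NeZero (volume : Measure (EuclideanSpace ℝ (Fin 3))).toSphere :=
    ⟨Measure.toSphere_ne_zero _⟩
  exact isProbabilityMeasureSMul

/-- For `2|y| < |x|`, the angular part of the Yukawa kernel satisfies
`|K(x,y)| ≤ C |y| |x|⁻² e^{-|x|/4}` for an absolute constant `C`. -/
theorem angularYukawa_bound_far :
    ∃ C : ℝ, 0 < C ∧ ∀ x y : EuclideanSpace ℝ (Fin 3), 2 * ‖y‖ < ‖x‖ →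
      |angularYukawa x y| ≤ C * ‖y‖ * ‖x‖⁻¹ ^ 2 * Real.exp (-‖x‖ / 4) := by
  exact ⟨16, by norm_num, fun _ y hxy =>
    angularYukawa_bound_far_general sphereProb (by linarith [norm_nonneg y]) hxy.le⟩
end
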